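/- Fix integers m ≥ 1 and 0 ≤ ℓ ≤ m−1 and apply the construction in the context with f = χ_m^{(ℓ)}, M = 8m+4, ν = 1, a = (2m−2ℓ−1)², and b = 8(2m+1), obtaining the sequence ξ_{ℓ,m}(n). Then ξ_{ℓ,m}(n) / [ sin(π(ℓ+1)/(2m+1)) · ((2m+1)/π²)^(n+1) · 2^(n+3) · n! · √n · e^(π²/(8m+4)) / √π ] → 1 as n → ∞. -/

import Mathlib

/-- The Fourier coefficient `G_f^{(ν)}(k)` of a function `f : ℤ → ℝ` of period `M`. -/
noncomputable def Gf (M : ℕ) (f : ℤ → ℝ) (ν : ℕ) (k : ℕ) : ℝ :=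
  if ν = 0 then
    (2 / Real.sqrt M) * ∑ m ∈ Finset.range M, f m * Real.sin (2 * Real.pi * m * k / M)
  else
    (2 / Real.sqrt M) * ∑ m ∈ Finset.range M, f m * Real.cos (2 * Real.pi * m * k / M)

/-- `C_n = (−1)^(n+1) (M^(2n+ν)/(2n+ν+1)) ∑_{m=1}^M f(m) B_{2n+ν+1}(m/M)`. -/
noncomputable def Cf (M : ℕ) (f : ℤ → ℝ) (ν : ℕ) (n : ℕ) : ℝ :=
  (-1) ^ (n + 1) * ((M : ℝ) ^ (2 * n + ν) / (2 * n + ν + 1)) *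
    ∑ m ∈ Finset.Icc 1 M,
      f m * (((Polynomial.bernoulli (2 * n + ν + 1)).eval ((m : ℚ) / (M : ℚ)) : ℚ) : ℝ)

/-- `D_n = b^(−n) ∑_{k=0}^n C(n,k) a^(n−k) C_k`. -/
noncomputable def Df (M : ℕ) (f : ℤ → ℝ) (ν a b : ℕ) (n : ℕ) : ℝ :=
  ((b : ℝ) ^ n)⁻¹ *
    ∑ k ∈ Finset.range (n + 1), (n.choose k : ℝ) * (a : ℝ) ^ (n - k) * Cf M f ν k

/-- The unsigned Stirling number of the first kind `s(n,j)`: the coefficient of `X^j`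
in `X (X+1) (X+2) ⋯ (X+n−1)`. -/
noncomputable def stirling1 (n j : ℕ) : ℝ :=
  (∏ i ∈ Finset.range n, (Polynomial.X + Polynomial.C (i : ℝ))).coeff j

/-- `ξ(0) = D_0` and `ξ(n) = (1/n!) ∑_{m=0}^{n−1} s(n, n−m) D_{n−m}` for `n ≥ 1`. -/
noncomputable def xif (M : ℕ) (f : ℤ → ℝ) (ν a b : ℕ) : ℕ → ℝ
  | 0 => Df M f ν a b 0
  | n + 1 => (1 / ((n + 1).factorial : ℝ)) *
      ∑ m ∈ Finset.range (n + 1), stirling1 (n + 1) (n + 1 - m) * Df M f ν a b (n + 1 - m)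

/-- The periodic function `χ_m^{(ℓ)}` of period `8m+4` from Hikami's strange identity for
the Kontsevich–Zagier series of the torus knot `T(2, 2m+1)`. -/
noncomputable def chiX (m ℓ : ℕ) (n : ℤ) : ℝ :=
  if n % (8 * m + 4) = (2 * m - 2 * ℓ - 1) % (8 * m + 4) ∨
      n % (8 * m + 4) = (6 * m + 2 * ℓ + 5) % (8 * m + 4) then -(1 / 2)
  else if n % (8 * m + 4) = (2 * m + 2 * ℓ + 3) % (8 * m + 4) ∨
      n % (8 * m + 4) = (6 * m - 2 * ℓ + 1) % (8 * m + 4) then 1 / 2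
  else 0

/-!
By the Fourier expansion of the Bernoulli polynomials, the first Fourier mode dominates `C_n`, so
`C_n` is asymptotic to a constant times `(2n+1)! R^n` with `R = (M/2π)²`. Growth of this strength
makes the binomial sum defining `D_n` and the Stirling sum defining `ξ(n)` concentrate at indices
`u = n - j` with `j` bounded, and Tannery's theorem gives their limits term by term after division
by `(2n+1)! R^n`. The binomial weights are `O(n^j)` against the ratio
`(2u+1)!/(2n+1)! ~ (2n)^(-2j)`, so only `j = 0` survives; the Stirling weights
`s(u+j, u) ~ u^(2j) / (2^j j!)` have exactly the critical size and contribute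
`∑ (b/8R)^j / j! = e^(b/8R)`. Stirling's formula then turns `(2n+1)!/n!` into `4^n n! √n`, and the
constant is the first cosine coefficient of `χ_m^{(ℓ)}`, which is a multiple of
`sin(π(ℓ+1)/(2m+1))`.
-/

open Filter Topology Asymptotics Finset
open scoped Nat Real

/-! ### Tannery sums and Stirling numbers -/

theorem tendsto_sum_antidiagonal_mul_of_dominated {R : Type*} [NormedRing R] [CompleteSpace R]
    {w : ℕ → ℕ → R} {W c : ℕ → R} {bound : ℕ → ℝ} {L : R} (h_sum : Summable bound)
    (h_bound : ∀ u j, ‖w u j‖ ≤ bound j)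
    (hw : ∀ j, Tendsto (fun u ↦ w u j) atTop (𝓝 (W j))) (hc : Tendsto c atTop (𝓝 L)) :
    Tendsto (fun n ↦ ∑ p ∈ antidiagonal n, w p.1 p.2 * c p.1) atTop (𝓝 (∑' j, W j * L)) := by
  obtain ⟨A, hA⟩ : ∃ A, ∀ n, ‖c n‖ ≤ A := by
    obtain ⟨A, hA⟩ := (Metric.isBounded_range_of_tendsto c hc).exists_norm_le
    exact ⟨A, fun n ↦ hA _ ⟨n, rfl⟩⟩
  let summand (n j : ℕ) : R := if j ≤ n then w (n - j) j * c (n - j) else 0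
  have sum_eq_tsum (n : ℕ) : ∑' j, summand n j = ∑ p ∈ antidiagonal n, w p.1 p.2 * c p.1 := by
    rw [← Nat.sum_antidiagonal_swap, Nat.sum_antidiagonal_eq_sum_range_succ_mk,
      tsum_eq_sum (s := range (n + 1)) fun j hj ↦ if_neg (by simpa using hj)]
    exact sum_congr rfl fun j hj ↦ if_pos (Nat.lt_succ_iff.mp (mem_range.mp hj))
  have summand_lim (j : ℕ) : Tendsto (summand · j) atTop (𝓝 (W j * L)) := by
    have hsub := tendsto_sub_atTop_nat j
    refine (((hw j).comp hsub).mul (hc.comp hsub)).congr' ?_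
    filter_upwards [eventually_ge_atTop j] with n hn using (if_pos hn).symm
  have summand_le (n j : ℕ) : ‖summand n j‖ ≤ bound j * A := by
    have bound_nonneg : 0 ≤ bound j := (norm_nonneg _).trans (h_bound 0 j)
    have A_nonneg : 0 ≤ A := (norm_nonneg _).trans (hA 0)
    unfold summand
    split_ifs
    · exact (norm_mul_le _ _).trans (by gcongr <;> apply_assumption)
    · simpa using mul_nonneg bound_nonneg A_nonneg
  simpa only [sum_eq_tsum] using tendsto_tsum_of_dominated_convergence (h_sum.mul_right A)
    summand_lim (.of_forall fun n j ↦ summand_le n j)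

theorem isEquivalent_pow_of_pow_le_of_le_add_pow {f : ℕ → ℝ} {c k : ℕ}
    (lower : ∀ n : ℕ, (n : ℝ) ^ k ≤ f n) (upper : ∀ n : ℕ, f n ≤ ((n : ℝ) + c) ^ k) :
    f ~[atTop] fun n ↦ (n : ℝ) ^ k := by
  refine isEquivalent_of_tendsto_one ?_
  have hupper : Tendsto (fun n : ℕ ↦ (1 + (c : ℝ) / n) ^ k) atTop (𝓝 1) := by
    simpa using ((tendsto_const_div_atTop_nhds_zero_nat (c : ℝ)).const_add 1).pow k
  refine tendsto_of_tendsto_of_tendsto_of_le_of_le' tendsto_const_nhds hupper ?_ ?_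
  · filter_upwards [eventually_gt_atTop 0] with n hn
    exact (one_le_div (by positivity)).mpr (lower n)
  · filter_upwards [eventually_gt_atTop 0] with n hn
    rw [Pi.div_apply, one_add_div (by positivity), div_pow]
    gcongr
    exact upper n

theorem ascFactorial_isEquivalent_pow (c k : ℕ) :
    (fun n : ℕ ↦ ((n + c).ascFactorial k : ℝ)) ~[atTop] fun n ↦ (n : ℝ) ^ k := by
  refine isEquivalent_pow_of_pow_le_of_le_add_pow (c := c + k) (fun n ↦ ?_) fun n ↦ ?_
  · exact_mod_cast (Nat.pow_le_pow_left (n.le_add_right c) k).trans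
      (Nat.pow_succ_le_ascFactorial _ k)
  · exact_mod_cast ((Nat.ascFactorial_le k (n + c).le_succ).trans
      (Nat.ascFactorial_le_pow_add _ k)).trans_eq (by rw [add_assoc])

theorem stirlingFirst_add_succ_succ (u j : ℕ) :
    Nat.stirlingFirst (u + 1 + (j + 1)) (u + 1) =
      (u + 1 + j) * Nat.stirlingFirst (u + 1 + j) (u + 1) + Nat.stirlingFirst (u + (j + 1)) u := by
  rw [← add_assoc, Nat.stirlingFirst_succ_succ, show u + 1 + j = u + (j + 1) by ring]

theorem two_pow_mul_factorial_mul_stirlingFirst_le :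
    ∀ u j : ℕ, 2 ^ j * j ! * Nat.stirlingFirst (u + j) u ≤ (u + j) ^ (2 * j)
  | u, 0 => by simp [Nat.stirlingFirst_self]
  | 0, j + 1 => by simp [← add_assoc]
  | u + 1, j + 1 => by
    have bernoulli := pow_add_mul_le_add_pow (a := u + 1 + j) (b := 1) (by lia) (by lia)
      (2 * j + 2)
    have ih_u := two_pow_mul_factorial_mul_stirlingFirst_le u (j + 1)
    have ih_j := two_pow_mul_factorial_mul_stirlingFirst_le (u + 1) j
    rw [show u + (j + 1) = u + 1 + j by ring] at ih_u
    calc 2 ^ (j + 1) * (j + 1)! * Nat.stirlingFirst (u + 1 + (j + 1)) (u + 1)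
        = 2 ^ (j + 1) * (j + 1)! * Nat.stirlingFirst (u + 1 + j) u +
            2 * (j + 1) * (u + 1 + j) * (2 ^ j * j ! * Nat.stirlingFirst (u + 1 + j) (u + 1)) := by
          rw [stirlingFirst_add_succ_succ, show u + (j + 1) = u + 1 + j by ring,
            Nat.factorial_succ]
          ring
      _ ≤ (u + 1 + j) ^ (2 * (j + 1)) + 2 * (j + 1) * (u + 1 + j) * (u + 1 + j) ^ (2 * j) := by
          gcongr
      _ = (u + 1 + j) ^ (2 * j + 2) + (2 * j + 2) * (u + 1 + j) ^ (2 * j + 1) * 1 := by ring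
      _ ≤ (u + 1 + (j + 1)) ^ (2 * (j + 1)) := by simpa [mul_add, add_assoc] using bernoulli

theorem add_one_pow_le_pow_add_mul (v k : ℕ) :
    (v + 1) ^ (k + 1) ≤ v ^ (k + 1) + (k + 1) * (v + 1) ^ k := by
  have bernoulli := pow_add_mul_le_add_pow (a := (v + 1 : ℤ)) (b := -1) (by lia) (by lia) (k + 1)
  zify
  simp only [add_neg_cancel_right, add_tsub_cancel_right] at bernoulli
  push_cast at bernoulli
  linarith

theorem pow_le_two_pow_mul_factorial_mul_stirlingFirst :
    ∀ u j : ℕ, u ^ (2 * j) ≤ 2 ^ j * j ! * Nat.stirlingFirst (u + j) u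
  | u, 0 => by simp [Nat.stirlingFirst_self]
  | 0, j + 1 => by simp
  | u + 1, j + 1 => by
    have ih_u := pow_le_two_pow_mul_factorial_mul_stirlingFirst u (j + 1)
    have ih_j := pow_le_two_pow_mul_factorial_mul_stirlingFirst (u + 1) j
    calc (u + 1) ^ (2 * (j + 1))
        ≤ u ^ (2 * (j + 1)) + (2 * j + 2) * (u + 1) ^ (2 * j + 1) :=
          add_one_pow_le_pow_add_mul u (2 * j + 1)
      _ = u ^ (2 * (j + 1)) + 2 * (j + 1) * (u + 1) * (u + 1) ^ (2 * j) := by ring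
      _ ≤ 2 ^ (j + 1) * (j + 1)! * Nat.stirlingFirst (u + (j + 1)) u +
            2 * (j + 1) * (u + 1 + j) * (2 ^ j * j ! * Nat.stirlingFirst (u + 1 + j) (u + 1)) := by
          have := Nat.le_add_right (u + 1) j
          gcongr
      _ = 2 ^ (j + 1) * (j + 1)! * Nat.stirlingFirst (u + 1 + (j + 1)) (u + 1) := by
          rw [stirlingFirst_add_succ_succ, Nat.factorial_succ]
          ring

theorem stirlingFirst_add_isEquivalent (j : ℕ) :
    (fun u ↦ (Nat.stirlingFirst (u + j) u : ℝ)) ~[atTop]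
      fun u ↦ (u : ℝ) ^ (2 * j) / (2 ^ j * j !) := by
  have scaled : (fun u ↦ (2 ^ j * j ! * Nat.stirlingFirst (u + j) u : ℝ)) ~[atTop]
      fun u ↦ (u : ℝ) ^ (2 * j) :=
    isEquivalent_pow_of_pow_le_of_le_add_pow (c := j)
      (fun u ↦ mod_cast pow_le_two_pow_mul_factorial_mul_stirlingFirst u j)
      (fun u ↦ mod_cast two_pow_mul_factorial_mul_stirlingFirst_le u j)
  exact (scaled.div (IsEquivalent.refl (u := fun _ ↦ (2 ^ j * j ! : ℝ)))).congr_left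
    (.of_forall fun u ↦ mul_div_cancel_left₀ _ (by positivity))

theorem factorial_mul_stirlingFirst_mul_factorial_le :
    ∀ u j : ℕ, j ! * Nat.stirlingFirst (u + j) u * (2 * u + 1)! ≤ (2 * (u + j) + 1)!
  | u, 0 => by simp [Nat.stirlingFirst_self]
  | 0, j + 1 => by simp [← add_assoc]
  | u + 1, j + 1 => by
    have ih_u := factorial_mul_stirlingFirst_mul_factorial_le u (j + 1)
    have ih_j := factorial_mul_stirlingFirst_mul_factorial_le (u + 1) j
    have odd_factorial_succ (k : ℕ) :
        (2 * (k + 1) + 1)! = (2 * k + 3) * (2 * k + 2) * (2 * k + 1)! := by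
      rw [show 2 * (k + 1) + 1 = 2 * k + 1 + 1 + 1 by ring, Nat.factorial_succ, Nat.factorial_succ]
      ring
    rw [show u + (j + 1) = u + 1 + j by ring] at ih_u
    calc (j + 1)! * Nat.stirlingFirst (u + 1 + (j + 1)) (u + 1) * (2 * (u + 1) + 1)!
        = (2 * u + 3) * (2 * u + 2) *
              ((j + 1)! * Nat.stirlingFirst (u + 1 + j) u * (2 * u + 1)!) +
            (j + 1) * (u + 1 + j) *
              (j ! * Nat.stirlingFirst (u + 1 + j) (u + 1) * (2 * (u + 1) + 1)!) := by
          rw [stirlingFirst_add_succ_succ, show u + (j + 1) = u + 1 + j by ring,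
            odd_factorial_succ u, Nat.factorial_succ]
          ring
      _ ≤ (2 * u + 3) * (2 * u + 2) * (2 * (u + 1 + j) + 1)! +
            (j + 1) * (u + 1 + j) * (2 * (u + 1 + j) + 1)! := by gcongr
      _ = ((2 * u + 3) * (2 * u + 2) + (j + 1) * (u + 1 + j)) * (2 * (u + 1 + j) + 1)! := by ring
      _ ≤ (2 * (u + 1 + j) + 3) * (2 * (u + 1 + j) + 2) * (2 * (u + 1 + j) + 1)! := by
          gcongr ?_ * _
          nlinarith
      _ = (2 * (u + 1 + (j + 1)) + 1)! := by rw [← odd_factorial_succ]; rfl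

theorem factorial_mul_choose_mul_factorial_le (u j : ℕ) :
    j ! * (u + j).choose u * (2 * u + 1)! ≤ (2 * (u + j) + 1)! :=
  calc j ! * (u + j).choose u * (2 * u + 1)!
      = (2 * u + 1)! * (u + 1).ascFactorial j := by
        rw [Nat.ascFactorial_eq_factorial_mul_choose, Nat.choose_symm_add, mul_comm]
    _ ≤ (2 * u + 1)! * (2 * u + 1 + 1).ascFactorial j := by
        gcongr
        lia
    _ = (2 * u + 1 + j)! := Nat.factorial_mul_ascFactorial _ _
    _ ≤ (2 * (u + j) + 1)! := Nat.factorial_le (by lia)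

/-- The quotient of the normalising factors `(2n+1)!` at `n = u` and `n = u + j`; it measures the
contribution of the index `u` to a sum over `antidiagonal (u + j)`. -/
noncomputable def oddFactorialRatio (u j : ℕ) : ℝ :=
  (2 * u + 1)! / (2 * (u + j) + 1)!

theorem oddFactorialRatio_eq_inv_ascFactorial (u j : ℕ) :
    oddFactorialRatio u j = ((2 * u + 2).ascFactorial (2 * j) : ℝ)⁻¹ := by
  have split : (2 * (u + j) + 1)! = (2 * u + 1)! * (2 * u + 2).ascFactorial (2 * j) := by
    rw [Nat.factorial_mul_ascFactorial]
    congr 1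
    ring
  rw [oddFactorialRatio, split, Nat.cast_mul, div_mul_cancel_left₀ (by positivity)]

theorem oddFactorialRatio_isEquivalent (j : ℕ) :
    (oddFactorialRatio · j) ~[atTop] fun u ↦ (((2 * u : ℕ) : ℝ) ^ (2 * j))⁻¹ := by
  simp only [oddFactorialRatio_eq_inv_ascFactorial]
  exact ((ascFactorial_isEquivalent_pow 2 (2 * j)).comp_tendsto
    (tendsto_id.const_mul_atTop' two_pos)).inv

theorem tendsto_stirlingFirst_mul_oddFactorialRatio (j : ℕ) :
    Tendsto (fun u ↦ Nat.stirlingFirst (u + j) u * oddFactorialRatio u j) atTop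
      (𝓝 ((1 / 8) ^ j / j !)) := by
  refine ((stirlingFirst_add_isEquivalent j).mul
    (oddFactorialRatio_isEquivalent j)).tendsto_nhds_iff.mpr (tendsto_const_nhds.congr' ?_)
  filter_upwards [eventually_gt_atTop 0] with u hu
  have : (8 : ℝ) ^ j = 2 ^ j * 2 ^ (2 * j) := by rw [pow_mul, ← mul_pow]; norm_num
  simp only [Pi.mul_apply]
  rw [one_div, inv_pow, this]
  push_cast
  rw [mul_pow]
  field_simp

theorem tendsto_choose_mul_oddFactorialRatio (j : ℕ) :
    Tendsto (fun u ↦ (u + j).choose u * oddFactorialRatio u j) atTop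
      (𝓝 (0 ^ j / j !)) := by
  have choose_equiv : (fun u ↦ ((u + j).choose u : ℝ)) ~[atTop] fun u ↦ (u : ℝ) ^ j / j ! := by
    refine ((ascFactorial_isEquivalent_pow 1 j).div
      (IsEquivalent.refl (u := fun _ ↦ (j ! : ℝ)))).congr_left (.of_forall fun u ↦ ?_)
    simp only [Nat.ascFactorial_eq_factorial_mul_choose, Nat.choose_symm_add]
    push_cast
    exact mul_div_cancel_left₀ _ (by positivity)
  have inv_lim : Tendsto (fun u : ℕ ↦ (1 / 4 / (u : ℝ)) ^ j / j !) atTop (𝓝 (0 ^ j / j !)) :=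
    ((tendsto_const_div_atTop_nhds_zero_nat _).pow j).div_const _
  refine (choose_equiv.mul (oddFactorialRatio_isEquivalent j)).tendsto_nhds_iff.mpr
    (inv_lim.congr' ?_)
  filter_upwards [eventually_gt_atTop 0] with u hu
  simp only [Pi.mul_apply]
  push_cast
  rw [show (2 * u : ℝ) ^ (2 * j) = 4 ^ j * (u ^ j * u ^ j) by
    rw [pow_mul, ← mul_pow, ← mul_pow]; congr 1; ring, div_pow, div_pow, one_pow]
  field_simp

theorem mul_oddFactorialRatio_le_one_div_factorial {w u j : ℕ}
    (h : j ! * w * (2 * u + 1)! ≤ (2 * (u + j) + 1)!) :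
    w * oddFactorialRatio u j ≤ 1 / j ! := by
  have h' : (j ! * w * (2 * u + 1)! : ℝ) ≤ (2 * (u + j) + 1)! := mod_cast h
  rw [oddFactorialRatio, ← mul_div_assoc, div_le_div_iff₀ (by positivity) (by positivity)]
  linarith

theorem tendsto_sum_antidiagonal_div_of_tendsto_div {w : ℕ → ℕ → ℕ} {W c : ℕ → ℝ} {R L : ℝ}
    (hR : R ≠ 0) (x : ℝ)
    (h_bound : ∀ u j, j ! * w u j * (2 * u + 1)! ≤ (2 * (u + j) + 1)!)
    (hw : ∀ j, Tendsto (fun u ↦ w u j * oddFactorialRatio u j) atTop (𝓝 (W j)))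
    (hc : Tendsto (fun n ↦ c n / ((2 * n + 1)! * R ^ n)) atTop (𝓝 L)) :
    Tendsto (fun n ↦ (∑ p ∈ antidiagonal n, w p.1 p.2 * x ^ p.2 * c p.1) / ((2 * n + 1)! * R ^ n))
      atTop (𝓝 ((∑' j, W j * (x / R) ^ j) * L)) := by
  have weight_le (u j : ℕ) :
      ‖w u j * oddFactorialRatio u j * (x / R) ^ j‖ ≤ |x / R| ^ j / j ! := by
    have ratio_nonneg : 0 ≤ oddFactorialRatio u j := by unfold oddFactorialRatio; positivity
    calc ‖w u j * oddFactorialRatio u j * (x / R) ^ j‖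
        = w u j * oddFactorialRatio u j * |x / R| ^ j := by
          rw [norm_mul, norm_pow, Real.norm_eq_abs, Real.norm_eq_abs,
            abs_of_nonneg (mul_nonneg (Nat.cast_nonneg _) ratio_nonneg)]
      _ ≤ 1 / j ! * |x / R| ^ j := by
          gcongr
          exact mul_oddFactorialRatio_le_one_div_factorial (h_bound u j)
      _ = |x / R| ^ j / j ! := by ring
  have := tendsto_sum_antidiagonal_mul_of_dominated (Real.summable_pow_div_factorial |x / R|)
    weight_le (fun j ↦ (hw j).mul_const _) hc
  rw [tsum_mul_right] at this
  refine this.congr fun n ↦ ?_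
  rw [sum_div]
  refine sum_congr rfl fun ⟨u, j⟩ hp ↦ ?_
  obtain rfl : u + j = n := mem_antidiagonal.mp hp
  rw [oddFactorialRatio, pow_add, div_pow]
  field_simp

/-! ### The sequences `C`, `D` and `ξ` -/

theorem stirling1_eq_stirlingFirst : ∀ n k : ℕ, stirling1 n k = Nat.stirlingFirst n k
  | 0, 0 => by simp [stirling1]
  | 0, k + 1 => by simp [stirling1, Polynomial.coeff_one]
  | n + 1, 0 => by
    simp [stirling1, prod_range_succ']
  | n + 1, k + 1 => by
    rw [Nat.stirlingFirst_succ_succ, Nat.cast_add, Nat.cast_mul, ← stirling1_eq_stirlingFirst n,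
      ← stirling1_eq_stirlingFirst n, stirling1, prod_range_succ, mul_add, Polynomial.coeff_add,
      Polynomial.coeff_mul_X, Polynomial.coeff_mul_C, add_comm, mul_comm]
    rfl

theorem factorial_mul_xif (M : ℕ) (f : ℤ → ℝ) (ν a b : ℕ) : ∀ n : ℕ,
    n ! * xif M f ν a b n =
      ∑ p ∈ antidiagonal n, Nat.stirlingFirst (p.1 + p.2) p.1 * Df M f ν a b p.1
  | 0 => by simp [xif]
  | n + 1 => by
    simp only [xif, stirling1_eq_stirlingFirst]
    rw [← mul_assoc, mul_one_div_cancel (by positivity), one_mul, ← Nat.sum_antidiagonal_swap,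
      Nat.sum_antidiagonal_eq_sum_range_succ_mk, sum_range_succ _ (n + 1)]
    simp only [Prod.fst_swap, Prod.snd_swap, Nat.sub_self, zero_add, Nat.stirlingFirst_succ_zero,
      Nat.cast_zero, zero_mul, add_zero]
    refine sum_congr rfl fun j hj ↦ ?_
    rw [Nat.sub_add_cancel (mem_range.mp hj).le]

theorem pow_mul_Df (M : ℕ) (f : ℤ → ℝ) (ν a : ℕ) {b : ℕ} (hb : b ≠ 0) (n : ℕ) :
    b ^ n * Df M f ν a b n =
      ∑ p ∈ antidiagonal n, (p.1 + p.2).choose p.1 * (a : ℝ) ^ p.2 * Cf M f ν p.1 := by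
  rw [Df, mul_inv_cancel_left₀ (by positivity), Nat.sum_antidiagonal_eq_sum_range_succ_mk]
  refine sum_congr rfl fun k hk ↦ ?_
  rw [Nat.add_sub_cancel' (Nat.lt_succ_iff.mp (mem_range.mp hk))]

theorem tendsto_bernoulli_eval_nhds_cos {x : ℝ} (hx : x ∈ Set.Icc (0 : ℝ) 1) :
    Tendsto (fun n : ℕ ↦ (-1 : ℝ) ^ n * (2 * π) ^ (2 * n + 2) / 2 / (2 * n + 2)! *
      ((Polynomial.bernoulli (2 * n + 2)).map (algebraMap ℚ ℝ)).eval x) atTop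
      (𝓝 (Real.cos (2 * π * x))) := by
  -- The left-hand side is the Dirichlet series with coefficients `cos (2πjx)` at `2n + 2`, and a
  -- Dirichlet series tends to its first coefficient.
  let a (j : ℕ) : ℂ := (Real.cos (2 * π * j * x) : ℝ)
  have abscissa_lt_top : LSeries.abscissaOfAbsConv a < ⊤ := by
    refine (LSeries.abscissaOfAbsConv_le_of_le_const ⟨1, fun j _ ↦ ?_⟩).trans_lt
      (EReal.coe_lt_top 1)
    rw [Complex.norm_real]
    exact Real.abs_cos_le_one _
  have LSeries_eq (n : ℕ) : LSeries a ((2 * (n + 1) : ℕ) : ℝ) =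
      ((-1 : ℝ) ^ n * (2 * π) ^ (2 * n + 2) / 2 / (2 * n + 2)! *
        ((Polynomial.bernoulli (2 * n + 2)).map (algebraMap ℚ ℝ)).eval x : ℝ) := by
    have term_eq (j : ℕ) : LSeries.term a ((2 * (n + 1) : ℕ) : ℝ) j =
        (1 / (j : ℝ) ^ (2 * (n + 1)) * Real.cos (2 * π * j * x) : ℝ) := by
      rcases eq_or_ne j 0 with rfl | hj
      · simp
      · rw [LSeries.term_of_ne_zero hj, Complex.ofReal_natCast, Complex.cpow_natCast]
        simp only [a]
        push_cast
        ring
    rw [LSeries, tsum_congr term_eq, ← Complex.ofReal_tsum,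
      (hasSum_one_div_nat_pow_mul_cos n.succ_ne_zero hx).tsum_eq, Nat.succ_eq_add_one,
      mul_add_one, show (-1 : ℝ) ^ (n + 1 + 1) = (-1) ^ n by rw [pow_add, pow_succ]; simp]
  have even_atTop : Tendsto (fun n : ℕ ↦ ((2 * (n + 1) : ℕ) : ℝ)) atTop atTop :=
    tendsto_natCast_atTop_atTop.comp
      ((tendsto_add_atTop_nat 1).const_mul_atTop' two_pos)
  have := (LSeries.tendsto_atTop abscissa_lt_top).comp even_atTop
  simp only [Function.comp_def, LSeries_eq] at this
  simpa [a] using tendsto_ofReal_iff.mp this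

theorem tendsto_Cf_one_div {M : ℕ} (hM : M ≠ 0) (f : ℤ → ℝ) :
    Tendsto (fun n ↦ Cf M f 1 n / ((2 * n + 1)! * ((M / (2 * π)) ^ 2) ^ n)) atTop
      (𝓝 (-(M / (2 * π ^ 2)) * ∑ k ∈ Icc 1 M, f k * Real.cos (2 * π * (k / M)))) := by
  have sum_lim := tendsto_finsetSum (Icc 1 M) fun k hk ↦
    (tendsto_bernoulli_eval_nhds_cos (x := k / M) ⟨by positivity,
      div_le_one_of_le₀ (mod_cast (mem_Icc.mp hk).2) (by positivity)⟩).const_mul (f k)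
  refine (sum_lim.const_mul (-(M / (2 * π ^ 2)))).congr fun n ↦ ?_
  have eval_cast (k : ℕ) : (((Polynomial.bernoulli (2 * n + 2)).eval ((k : ℚ) / M) : ℚ) : ℝ) =
      ((Polynomial.bernoulli (2 * n + 2)).map (algebraMap ℚ ℝ)).eval ((k : ℝ) / M) := by
    simpa using (Polynomial.eval_map_apply (f := algebraMap ℚ ℝ)
      (p := Polynomial.bernoulli (2 * n + 2)) ((k : ℚ) / M)).symm
  simp only [Cf, eval_cast, mul_left_comm (f _), ← mul_sum]
  rw [Nat.factorial_succ (2 * n + 1), ← pow_mul, div_pow]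
  push_cast
  field_simp
  ring

theorem tendsto_pow_mul_Df_div {M : ℕ} {f : ℤ → ℝ} {ν b : ℕ} {R L : ℝ} (hR : R ≠ 0) (hb : b ≠ 0)
    (a : ℕ) (hC : Tendsto (fun n ↦ Cf M f ν n / ((2 * n + 1)! * R ^ n)) atTop (𝓝 L)) :
    Tendsto (fun n ↦ b ^ n * Df M f ν a b n / ((2 * n + 1)! * R ^ n)) atTop (𝓝 L) := by
  simp only [pow_mul_Df M f ν a hb]
  have weight_sum : ∑' j : ℕ, 0 ^ j / (j ! : ℝ) * (a / R) ^ j = 1 := by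
    rw [tsum_eq_single 0 fun j hj ↦ by simp [hj]]
    simp
  simpa only [weight_sum, one_mul] using tendsto_sum_antidiagonal_div_of_tendsto_div hR a
    factorial_mul_choose_mul_factorial_le tendsto_choose_mul_oddFactorialRatio hC

theorem tendsto_factorial_mul_xif_div {M : ℕ} {f : ℤ → ℝ} {ν b : ℕ} {R L : ℝ} (hR : R ≠ 0)
    (hb : b ≠ 0) (a : ℕ)
    (hC : Tendsto (fun n ↦ Cf M f ν n / ((2 * n + 1)! * R ^ n)) atTop (𝓝 L)) :
    Tendsto (fun n ↦ b ^ n * (n ! * xif M f ν a b n) / ((2 * n + 1)! * R ^ n)) atTop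
      (𝓝 (Real.exp (b / (8 * R)) * L)) := by
  have weight_sum : ∑' j : ℕ, (1 / 8) ^ j / (j ! : ℝ) * (b / R) ^ j = Real.exp (b / (8 * R)) := by
    rw [Real.exp_eq_exp_ℝ, NormedSpace.exp_eq_tsum_div]
    refine tsum_congr fun j ↦ ?_
    rw [div_mul_eq_mul_div, ← mul_pow, div_mul_div_comm, one_mul]
  have := tendsto_sum_antidiagonal_div_of_tendsto_div hR b
    factorial_mul_stirlingFirst_mul_factorial_le tendsto_stirlingFirst_mul_oddFactorialRatio
    (tendsto_pow_mul_Df_div hR hb a hC)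
  rw [weight_sum] at this
  refine this.congr fun n ↦ ?_
  rw [factorial_mul_xif, mul_sum]
  congr 1
  refine sum_congr rfl fun ⟨u, j⟩ hp ↦ ?_
  obtain rfl : u + j = n := mem_antidiagonal.mp hp
  rw [pow_add]
  ring

theorem two_mul_add_one_factorial_isEquivalent :
    (fun n : ℕ ↦ ((2 * n + 1)! : ℝ)) ~[atTop] fun n ↦ 2 / √π * ((n ! : ℝ) ^ 2 * √n * 4 ^ n) := by
  have stirling := Stirling.factorial_isEquivalent_stirling
  have double_atTop : Tendsto (fun n : ℕ ↦ 2 * n) atTop atTop :=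
    tendsto_id.const_mul_atTop' two_pos
  have even_factorial := stirling.comp_tendsto double_atTop
  have odd_factor : (fun n : ℕ ↦ (2 * n + 1 : ℝ)) ~[atTop] fun n ↦ (2 * n : ℝ) := by
    simpa [Function.comp_def, Nat.ascFactorial] using
      (ascFactorial_isEquivalent_pow 1 1).comp_tendsto double_atTop
  have square := (IsEquivalent.refl (u := fun _ : ℕ ↦ 2 / √π)).mul
    (((stirling.pow 2).mul (IsEquivalent.refl (u := fun n : ℕ ↦ √n))).mul
    (IsEquivalent.refl (u := fun n : ℕ ↦ (4 : ℝ) ^ n)))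
  refine ((odd_factor.mul even_factorial).congr_left ?_).trans (square.symm.congr_left ?_)
  · filter_upwards with n
    simp [Nat.factorial_succ]
  · filter_upwards with n
    have four_pow : (4 : ℝ) ^ n = 2 ^ (2 * n) := by rw [pow_mul]; norm_num
    have sqrt_double : √(2 * (2 * n : ℕ) * π) = 2 * √n * √π := by
      rw [← Real.sqrt_sq (zero_le_two (α := ℝ)), ← Real.sqrt_mul (by positivity),
        ← Real.sqrt_mul (by positivity)]
      push_cast
      congr 1
      ring
    simp only [Pi.mul_apply, Pi.pow_apply, Function.comp_apply, sqrt_double, mul_pow,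
      Real.sq_sqrt (show (0 : ℝ) ≤ 2 * n * π by positivity), four_pow]
    push_cast
    field_simp
    rw [Real.sq_sqrt (by positivity)]
    ring

theorem tendsto_xif_one_div {M b : ℕ} (hM : M ≠ 0) (hb : b ≠ 0) (f : ℤ → ℝ) (a : ℕ) :
    Tendsto (fun n ↦ xif M f 1 a b n / ((M ^ 2 / (π ^ 2 * b)) ^ n * n ! * √n)) atTop
      (𝓝 (-(M / (π ^ 2 * √π)) * Real.exp (π ^ 2 * b / (2 * M ^ 2)) *
        ∑ k ∈ Icc 1 M, f k * Real.cos (2 * π * (k / M)))) := by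
  have hR : ((M : ℝ) / (2 * π)) ^ 2 ≠ 0 := by positivity
  have transformed := tendsto_factorial_mul_xif_div hR hb a (tendsto_Cf_one_div hM f)
  have stirling := (IsEquivalent.refl
    (u := fun n ↦ b ^ n * (n ! * xif M f 1 a b n))).div
      (two_mul_add_one_factorial_isEquivalent.mul
        (IsEquivalent.refl (u := fun n ↦ (((M : ℝ) / (2 * π)) ^ 2) ^ n)))
  have growth (n : ℕ) :
      ((M : ℝ) ^ 2 / (π ^ 2 * b)) ^ n * b ^ n = 4 ^ n * ((M / (2 * π)) ^ 2) ^ n := by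
    rw [← mul_pow, ← mul_pow]
    congr 1
    field_simp
    norm_num
  convert ((stirling.tendsto_nhds transformed).mul_const (2 / √π)).congr' ?_ using 2
  · rw [show (b : ℝ) / (8 * (M / (2 * π)) ^ 2) = π ^ 2 * b / (2 * M ^ 2) by field_simp; ring]
    ring
  · filter_upwards [eventually_gt_atTop 0] with n hn
    simp only [Pi.mul_apply, Pi.div_apply]
    rw [div_mul_eq_mul_div, div_eq_div_iff (by positivity) (by positivity)]
    linear_combination (2 / √π * n ! ^ 2 * √n * xif M f 1 a b n) * growth n

/-! ### The periodic function `χ_m^{(ℓ)}` -/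

theorem sum_Icc_ite_modEq {α : Type*} [AddCommMonoid α] {M : ℕ} (hM : M ≠ 0) {g : ℤ → α}
    (hg : Function.Periodic g M) (c : ℤ) :
    ∑ k ∈ Icc 1 M, (if (k : ℤ) ≡ c [ZMOD M] then g k else 0) = g c := by
  obtain ⟨z, hz_lt, hz⟩ := Int.existsUnique_equiv_nat (c - 1) (b := M) (by positivity)
  have succ_mem : z + 1 ∈ Icc 1 M := by rw [mem_Icc]; lia
  have succ_modEq : ((z + 1 : ℕ) : ℤ) ≡ c [ZMOD M] := by simpa using hz.add_right 1
  have eq_succ (k : ℕ) (hk : k ∈ Icc 1 M) (h : (k : ℤ) ≡ c [ZMOD M]) : k = z + 1 := by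
    have dvd_sub := (h.trans succ_modEq.symm).dvd
    rw [mem_Icc] at hk
    have := Int.eq_zero_of_abs_lt_dvd dvd_sub (by rw [abs_lt]; lia)
    lia
  rw [sum_eq_single_of_mem _ succ_mem fun k hk hne ↦ if_neg (mt (eq_succ k hk) hne),
    if_pos succ_modEq]
  obtain ⟨q, hq⟩ := succ_modEq.dvd
  rw [eq_add_of_sub_eq' hq, mul_comm]
  exact (hg.int_mul q _).symm

theorem chiX_eq_sum_ite {m ℓ : ℕ} (h : ¬ 2 * m + 1 ∣ ℓ + 1) (n : ℤ) :
    chiX m ℓ n =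
      (if n ≡ 2 * m - 2 * ℓ - 1 [ZMOD 8 * m + 4] then -(1 / 2) else 0) +
      (if n ≡ 6 * m + 2 * ℓ + 5 [ZMOD 8 * m + 4] then -(1 / 2) else 0) +
      (if n ≡ 2 * m + 2 * ℓ + 3 [ZMOD 8 * m + 4] then 1 / 2 else 0) +
      (if n ≡ 6 * m - 2 * ℓ + 1 [ZMOD 8 * m + 4] then 1 / 2 else 0) := by
  have not_modEq_of_sub_emod_four {c d : ℤ} (hcd : (d - c) % 4 = 2)
      (hc : n ≡ c [ZMOD 8 * m + 4]) : ¬ n ≡ d [ZMOD 8 * m + 4] := fun hd ↦ by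
    have : (4 : ℤ) ∣ d - c := (Dvd.intro (2 * m + 1 : ℤ) (by ring)).trans (hc.symm.trans hd).dvd
    lia
  have not_modEq_of_sub_eq {c d : ℤ} (hcd : d - c = 4 * (ℓ + 1))
      (hc : n ≡ c [ZMOD 8 * m + 4]) : ¬ n ≡ d [ZMOD 8 * m + 4] := fun hd ↦ by
    have dvd_sub := (hc.symm.trans hd).dvd
    rw [hcd, show (8 * m + 4 : ℤ) = 4 * (2 * m + 1) by ring] at dvd_sub
    exact h (mod_cast Int.dvd_of_mul_dvd_mul_left four_ne_zero dvd_sub)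
  have h12 := not_modEq_of_sub_emod_four (c := 2 * m - 2 * ℓ - 1) (d := 6 * m + 2 * ℓ + 5) (by lia)
  have h13 := not_modEq_of_sub_eq (c := 2 * m - 2 * ℓ - 1) (d := 2 * m + 2 * ℓ + 3) (by lia)
  have h14 := not_modEq_of_sub_emod_four (c := 2 * m - 2 * ℓ - 1) (d := 6 * m - 2 * ℓ + 1) (by lia)
  have h23 := not_modEq_of_sub_emod_four (c := 6 * m + 2 * ℓ + 5) (d := 2 * m + 2 * ℓ + 3) (by lia)
  have h42 := not_modEq_of_sub_eq (c := 6 * m - 2 * ℓ + 1) (d := 6 * m + 2 * ℓ + 5) (by lia)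
  have h34 := not_modEq_of_sub_emod_four (c := 2 * m + 2 * ℓ + 3) (d := 6 * m - 2 * ℓ + 1) (by lia)
  simp only [chiX, ← Int.ModEq.eq_1]
  by_cases h1 : n ≡ 2 * m - 2 * ℓ - 1 [ZMOD 8 * m + 4]
  · simp [h1, h12 h1, h13 h1, h14 h1]
  by_cases h2 : n ≡ 6 * m + 2 * ℓ + 5 [ZMOD 8 * m + 4]
  · simp [h1, h2, h23 h2, mt h42 (not_not_intro h2)]
  by_cases h3 : n ≡ 2 * m + 2 * ℓ + 3 [ZMOD 8 * m + 4]
  · simp [h1, h2, h3, h34 h3]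
  · simp [h1, h2, h3]

theorem sum_chiX_mul {m ℓ : ℕ} (h : ¬ 2 * m + 1 ∣ ℓ + 1) {g : ℤ → ℝ}
    (hg : Function.Periodic g (8 * m + 4 : ℕ)) :
    ∑ k ∈ Icc 1 (8 * m + 4), chiX m ℓ k * g k =
      (g (2 * m + 2 * ℓ + 3) + g (6 * m - 2 * ℓ + 1) -
        g (2 * m - 2 * ℓ - 1) - g (6 * m + 2 * ℓ + 5)) / 2 := by
  have sum_ite (v : ℝ) (c : ℤ) : ∑ k ∈ Icc 1 (8 * m + 4),
      (if (k : ℤ) ≡ c [ZMOD 8 * m + 4] then v else 0) * g k = v * g c := by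
    rw [← sum_Icc_ite_modEq (by positivity) hg, mul_sum]
    push_cast
    simp only [ite_mul, zero_mul, mul_ite, mul_zero]
  simp only [chiX_eq_sum_ite h, add_mul, sum_add_distrib, sum_ite]
  ring

theorem sum_chiX_mul_cos {m ℓ : ℕ} (h : ¬ 2 * m + 1 ∣ ℓ + 1) :
    ∑ k ∈ Icc 1 (8 * m + 4), chiX m ℓ k * Real.cos (2 * π * (k / (8 * m + 4 : ℕ))) =
      -2 * Real.sin (π * (ℓ + 1) / (2 * m + 1)) := by
  have cos_periodic : Function.Periodic
      (fun k : ℤ ↦ Real.cos (2 * π * (k / (8 * m + 4 : ℕ)))) (8 * m + 4 : ℕ) := fun k ↦ by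
    simp only [Int.cast_add, Int.cast_natCast]
    rw [add_div, div_self (by positivity), mul_add_one, Real.cos_add_two_pi]
  have sum_eq := sum_chiX_mul h cos_periodic
  push_cast at sum_eq ⊢
  rw [sum_eq]
  set t := π * (ℓ + 1) / (2 * m + 1) with ht
  rw [show 2 * π * ((2 * m - 2 * ℓ - 1) / (8 * m + 4)) = π / 2 - t by rw [ht]; field_simp; ring,
    show 2 * π * ((6 * m + 2 * ℓ + 5) / (8 * m + 4)) = 2 * π - (π / 2 - t) by
      rw [ht]; field_simp; ring,
    show 2 * π * ((2 * m + 2 * ℓ + 3) / (8 * m + 4)) = t + π / 2 by rw [ht]; field_simp; ring,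
    show 2 * π * ((6 * m - 2 * ℓ + 1) / (8 * m + 4)) = 2 * π - (t + π / 2) by
      rw [ht]; field_simp; ring,
    Real.cos_two_pi_sub, Real.cos_two_pi_sub, Real.cos_pi_div_two_sub, Real.cos_add_pi_div_two]
  ring

theorem sin_pi_mul_div_ne_zero {p q : ℕ} (hq : q ≠ 0) (h : ¬ q ∣ p) :
    Real.sin (π * p / q) ≠ 0 := by
  rw [Ne, Real.sin_eq_zero_iff]
  rintro ⟨k, hk⟩
  have : (k * q : ℝ) = p := by
    field_simp at hk
    exact hk
  exact h (Int.natCast_dvd_natCast.mp ⟨k, by rw [mul_comm]; exact_mod_cast this.symm⟩)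

theorem tendsto_xif_chiX_div {m ℓ : ℕ} (h : ¬ 2 * m + 1 ∣ ℓ + 1) (a : ℕ) :
    Tendsto (fun n ↦ xif (8 * m + 4) (chiX m ℓ) 1 a (8 * (2 * m + 1)) n /
        ((2 * ((2 * m + 1) / π ^ 2)) ^ n * n ! * √n)) atTop
      (𝓝 (8 * Real.sin (π * (ℓ + 1) / (2 * m + 1)) * ((2 * m + 1) / π ^ 2) *
        Real.exp (π ^ 2 / (8 * m + 4)) / √π)) := by
  have growth : ((8 * m + 4 : ℕ) : ℝ) ^ 2 / (π ^ 2 * (8 * (2 * m + 1) : ℕ)) =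
      2 * ((2 * m + 1) / π ^ 2) := by
    push_cast
    field_simp
    ring
  have exponent : π ^ 2 * (8 * (2 * m + 1) : ℕ) / (2 * (8 * m + 4 : ℕ) ^ 2) =
      π ^ 2 / (8 * m + 4) := by
    push_cast
    field_simp
    ring
  have lim := tendsto_xif_one_div (M := 8 * m + 4) (b := 8 * (2 * m + 1)) (by positivity)
    (by positivity) (chiX m ℓ) a
  simp only [growth, exponent, sum_chiX_mul_cos h] at lim
  convert lim using 2
  push_cast
  field_simp
  ring

theorem torus_knot_T2_asymptotic_general {m ℓ : ℕ} (h : ¬ 2 * m + 1 ∣ ℓ + 1) (a : ℕ) :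
    Tendsto
      (fun n : ℕ ↦ xif (8 * m + 4) (chiX m ℓ) 1 a (8 * (2 * m + 1)) n /
        (Real.sin (π * (ℓ + 1) / (2 * m + 1)) * ((2 * m + 1 : ℝ) / π ^ 2) ^ (n + 1) *
          2 ^ (n + 3) * n ! * √n * Real.exp (π ^ 2 / (8 * m + 4)) / √π))
      atTop (𝓝 1) := by
  have sin_ne_zero : Real.sin (π * (ℓ + 1) / (2 * m + 1)) ≠ 0 := by
    exact_mod_cast sin_pi_mul_div_ne_zero (2 * m).succ_ne_zero h
  have lim := tendsto_xif_chiX_div h a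
  set s := Real.sin (π * (ℓ + 1) / (2 * m + 1))
  set r := (2 * m + 1 : ℝ) / π ^ 2
  set e := Real.exp (π ^ 2 / (8 * m + 4))
  have limit_ne_zero : 8 * s * r * e / √π ≠ 0 := by positivity
  clear_value s r e
  rw [← div_self limit_ne_zero]
  refine (lim.div_const _).congr fun n ↦ ?_
  rw [div_div]
  congr 1
  ring

/-- The coefficients `ξ_{ℓ,m}(n)` of `X_m^{(ℓ)}(1−q)` (obtained from the
construction with `f = χ_m^{(ℓ)}`, `M = 8m+4`, `ν = 1`, `a = (2m−2ℓ−1)²`, `b = 8(2m+1)`)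
satisfy `ξ_{ℓ,m}(n) ~ sin(π(ℓ+1)/(2m+1)) ((2m+1)/π²)^(n+1) 2^(n+3) n! √n
e^(π²/(8m+4)) / √π` as `n → ∞`. -/
theorem torus_knot_T2_asymptotic (m ℓ : ℕ) (hm : 1 ≤ m) (hℓ : ℓ ≤ m - 1) :
    Filter.Tendsto
      (fun n : ℕ =>
        xif (8 * m + 4) (chiX m ℓ) 1 ((2 * m - 2 * ℓ - 1) ^ 2) (8 * (2 * m + 1)) n /
          (Real.sin (Real.pi * (ℓ + 1) / (2 * m + 1)) *
            ((2 * m + 1 : ℝ) / Real.pi ^ 2) ^ (n + 1) * 2 ^ (n + 3) *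
            (n.factorial : ℝ) * Real.sqrt n *
            Real.exp (Real.pi ^ 2 / (8 * m + 4)) / Real.sqrt Real.pi))
      Filter.atTop (nhds 1) := by
  have not_dvd : ¬ 2 * m + 1 ∣ ℓ + 1 := fun h ↦ by have := Nat.le_of_dvd ℓ.succ_pos h; lia
  exact torus_knot_T2_asymptotic_general not_dvd _
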